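/- Let A be the 3×3 integer matrix [[2,1,1],[2,0,1],[1,1,1]], let B = A⁵ + [[0,1,−1],[0,1,−1],[0,1,−1]], and let μ be the largest real eigenvalue of B. Then for every integer a ≥ 2 there exist a constant C > 0 and M such that for all m ≥ M, f(a^m, a⁶) ≥ C · m^{1 + (1/5)·log₂ μ}. -/

import Mathlib

/-!
The proof builds many sequences by *folding*. If `v, c` has continuant `q`, then
`v, c, x - 1, 1, c - 1, v.reverse` has continuant `x * q ^ 2` (`continuant_fold`). Taking `x = a ^ k`
with `0 ≤ k ≤ 6` turns a sequence for `a ^ j` into one for `a ^ (2 * j + k)`; for `k = 0` the zero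
entry is contracted, which replaces `c` by `c + 1`. If the end entries of the sequence lie in
`[2, a ^ 6 - 2]` (the family `Good`), all new entries are again positive and below `a ^ 6`, and the
new end entries both equal the first old one, so the family is stable. The fold and its reverse,
over all `k` and all sequences, are pairwise distinct (`fold_inj`). Hence the number `T m` of good
sequences satisfies `T m ≥ 2 * ∑ T ((m - k) / 2)`, the sum being over `k ≤ 6` of the parity of `m`
(`two_mul_sum_le`), and `T m ≥ 1` for `m ≥ 3` by explicit seeds (`seed`, `good_pos`).

Bounding `T` below separately for `m` even, `m ≡ 1` and `m ≡ 3` modulo `4`, one step of the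
recursion multiplies the vector of bounds by `2 * A`. Unfolding five steps exactly, the numbers of
leaves in the three classes depend only on `m` modulo `128`, and a finite check (`cnt_bound`) shows
that against vectors `(e, x, y)` with `4 e ≥ 5 x`, `x ≥ y ≥ 0` they dominate the rows of `B`.
The eigenvector of `B` for `μ` lies in this cone, so the lower bound is multiplied by `32 * μ` when
`m + 6` is multiplied by `32` (`growth`), and `32 * μ = 32 ^ (1 + logb 2 μ / 5)`.
-/

/-- The continuant of a finite sequence of positive integers. -/
def continuant : List ℕ → ℕ
  | [] => 1
  | [a] => a
  | a :: b :: t => a * continuant (b :: t) + continuant t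

/-- `f d N` is the number of finite sequences of positive integers, all entries `< N`,
whose continuant equals `d`. -/
noncomputable def f (d N : ℕ) : ℕ :=
  Set.ncard {l : List ℕ | (∀ x ∈ l, 0 < x ∧ x < N) ∧ continuant l = d}

/-- `lam` is the largest real root of the real function `p`. -/
def IsGreatestRoot (p : ℝ → ℝ) (lam : ℝ) : Prop :=
  p lam = 0 ∧ ∀ x : ℝ, p x = 0 → x ≤ lam

/-! ### Continuants as matrix products, and folding -/

/-- The elementary matrix `[[a, 1], [1, 0]]` of a partial quotient. -/
def stepMat (a : ℕ) : Matrix (Fin 2) (Fin 2) ℕ := !![a, 1; 1, 0]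

lemma continuant_eq_prod (l : List ℕ) : continuant l = (l.map stepMat).prod 0 0 := by
  induction l using continuant.induct with
  | case1 => simp [continuant]
  | case2 a => simp [continuant, stepMat]
  | case3 a b t ih1 ih2 =>
    rw [continuant, ih1, ih2]
    simp only [List.map_cons, List.prod_cons]
    generalize (t.map stepMat).prod = P
    simp only [Matrix.mul_apply, Fin.sum_univ_two]
    simp [stepMat]

lemma prod_reverse (l : List ℕ) :
    (l.reverse.map stepMat).prod = ((l.map stepMat).prod).transpose := by
  have h : ∀ a, (stepMat a).transpose = stepMat a := by
    intro a
    ext i j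
    fin_cases i <;> fin_cases j <;> rfl
  induction l with
  | nil => simp
  | cons a t ih =>
    rw [List.reverse_cons, List.map_append, List.prod_append, ih]
    simp [Matrix.transpose_mul, h]

/-- The middle block of a folded sequence whose left half ended in `c`. The Boolean chooses between
a block and its reverse. For `k = 0` the block `c, 0, 1, c - 1` contains a zero, and is contracted
to `c + 1, c - 1`. -/
def mid (a k : ℕ) (s : Bool) (c : ℕ) : List ℕ :=
  if k = 0 then (if s then [c + 1, c - 1] else [c - 1, c + 1])
  else (if s then [c, a ^ k - 1, 1, c - 1] else [c - 1, 1, a ^ k - 1, c])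

/-- Folding: `v, c ↦ v, mid, v.reverse`. -/
def fold (a k : ℕ) (s : Bool) (u : List ℕ) : List ℕ :=
  u.dropLast ++ mid a k s (u.getLast?.getD 0) ++ u.dropLast.reverse

lemma fold_append (a k : ℕ) (s : Bool) (v : List ℕ) (c : ℕ) :
    fold a k s (v ++ [c]) = v ++ mid a k s c ++ v.reverse := by
  simp [fold]

/-- The folding identity: with `(p, q)` the first row of the matrix of `v`, both sides are the
quadratic form `a ^ k * (c * p + q) ^ 2`. -/
lemma continuant_fold {a : ℕ} (ha : 0 < a) (k : ℕ) (s : Bool) (v : List ℕ) {c : ℕ} (hc : 0 < c) :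
    continuant (v ++ mid a k s c ++ v.reverse) = a ^ k * continuant (v ++ [c]) ^ 2 := by
  rw [continuant_eq_prod, continuant_eq_prod]
  simp only [List.map_append, List.prod_append, prod_reverse]
  generalize (v.map stepMat).prod = P
  obtain ⟨c, rfl⟩ : ∃ d, c = d + 1 := ⟨c - 1, by omega⟩
  obtain ⟨y, hy⟩ : ∃ y, a ^ k = y + 1 := ⟨a ^ k - 1, by have := Nat.pow_pos (n := k) ha; omega⟩
  unfold mid
  by_cases hk : k = 0
  · subst hk
    cases s <;> simp [stepMat, Matrix.mul_apply, Fin.sum_univ_two] <;> ring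
  · rw [hy]
    cases s <;> simp [hk, stepMat, Matrix.mul_apply, Fin.sum_univ_two] <;> ring

lemma sandwich_inj {v v' m m' : List ℕ} (hm : m.length = m'.length)
    (h : v ++ m ++ v.reverse = v' ++ m' ++ v'.reverse) : v = v' ∧ m = m' := by
  have hl := congrArg List.length h
  simp only [List.length_append, List.length_reverse] at hl
  have h1 := List.append_inj h (by simp; omega)
  exact List.append_inj h1.1 (by omega)

/-- A contracted fold (`k = 0`) never equals an uncontracted one: around the centre the former
reads `d, _, _, d`, whereas the latter has outer entries differing by one. -/
lemma mid_ne {a k : ℕ} (hk : k ≠ 0) (s s' : Bool) {v v' : List ℕ} (hv' : v' ≠ []) {c c' : ℕ}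
    (hc : 0 < c) :
    v ++ mid a k s c ++ v.reverse ≠ v' ++ mid a 0 s' c' ++ v'.reverse := by
  intro h
  obtain ⟨w, d, rfl⟩ : ∃ w d, v' = w ++ [d] :=
    ⟨v'.dropLast, v'.getLast hv', (List.dropLast_append_getLast hv').symm⟩
  have h2 : v ++ mid a k s c ++ v.reverse = w ++ ([d] ++ mid a 0 s' c' ++ [d]) ++ w.reverse := by
    rw [h]; simp
  have h3 := (sandwich_inj (by cases s <;> cases s' <;> simp [mid, hk]) h2).2
  cases s <;> cases s' <;> simp [mid, hk] at h3 <;> omega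

lemma mid_inj {a k k' : ℕ} (ha : 2 ≤ a) {s s' : Bool} {v v' : List ℕ} (hv : v ≠ []) (hv' : v' ≠ [])
    {c c' : ℕ} (hc : 0 < c) (hc' : 0 < c')
    (h : v ++ mid a k s c ++ v.reverse = v' ++ mid a k' s' c' ++ v'.reverse) :
    k = k' ∧ s = s' ∧ v = v' ∧ c = c' := by
  by_cases hk : k = 0
  · by_cases hk' : k' = 0
    · subst hk hk'
      obtain ⟨h1, h2⟩ := sandwich_inj (by cases s <;> cases s' <;> simp [mid]) h
      refine ⟨rfl, ?_, h1, ?_⟩ <;> cases s <;> cases s' <;> simp [mid] at h2 ⊢ <;> omega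
    · subst hk
      exact absurd h.symm (mid_ne hk' _ _ hv hc')
  · by_cases hk' : k' = 0
    · subst hk'
      exact absurd h (mid_ne hk _ _ hv' hc)
    · obtain ⟨h1, h2⟩ := sandwich_inj (by cases s <;> cases s' <;> simp [mid, hk, hk']) h
      have hkk : a ^ k - 1 = a ^ k' - 1 → k = k' := fun e =>
        Nat.pow_right_injective ha (by
          have := Nat.pow_pos (n := k) (show 0 < a by omega)
          have := Nat.pow_pos (n := k') (show 0 < a by omega)
          show a ^ k = a ^ k'
          omega)
      cases s <;> cases s' <;> simp [mid, hk, hk'] at h2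
      · exact ⟨hkk h2.2.1, rfl, h1, h2.2.2⟩
      · omega
      · omega
      · exact ⟨hkk h2.2.1, rfl, h1, h2.1⟩

/-! ### The family of good sequences -/

/-- The sequences counted by `f (a ^ m) (a ^ 6)` of length at least two whose two end entries
lie in `[2, a ^ 6 - 2]`. This condition on the ends makes the family stable under folding. -/
def Good (a m : ℕ) : Set (List ℕ) :=
  {l | ∃ b w c, l = b :: w ++ [c] ∧ (2 ≤ b ∧ b + 2 ≤ a ^ 6) ∧ (2 ≤ c ∧ c + 2 ≤ a ^ 6) ∧
    (∀ x ∈ w, 0 < x ∧ x < a ^ 6) ∧ continuant l = a ^ m}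

lemma continuant_pos (l : List ℕ) (h : ∀ x ∈ l, 0 < x) : 0 < continuant l := by
  induction l using continuant.induct with
  | case1 => simp [continuant]
  | case2 a => simpa [continuant] using h
  | case3 a b t ih1 ih2 =>
    have := ih2 (fun x hx => h x (by simp [hx]))
    rw [continuant]
    omega

lemma length_le_continuant (l : List ℕ) (h : ∀ x ∈ l, 0 < x) : l.length ≤ continuant l := by
  induction l using continuant.induct with
  | case1 => simp
  | case2 a => simpa [continuant, Nat.one_le_iff_ne_zero, Nat.pos_iff_ne_zero] using h
  | case3 a b t ih1 ih2 =>
    have h1 := ih1 (fun x hx => h x (by simp at hx ⊢; tauto))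
    have h2 := continuant_pos t (fun x hx => h x (by simp [hx]))
    have h3 : 1 * continuant (b :: t) ≤ a * continuant (b :: t) :=
      Nat.mul_le_mul_right _ (h a (by simp))
    rw [continuant, List.length_cons]
    omega

lemma finite_counted (d N : ℕ) :
    {l : List ℕ | (∀ x ∈ l, 0 < x ∧ x < N) ∧ continuant l = d}.Finite := by
  refine ((List.finite_length_le (Fin N) d).image (List.map Fin.val)).subset ?_
  rintro l ⟨h1, h2⟩
  refine ⟨l.pmap (fun x hx => (⟨x, hx⟩ : Fin N)) (fun x hx => (h1 x hx).2), ?_, ?_⟩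
  · have := length_le_continuant l (fun x hx => (h1 x hx).1)
    simpa [h2] using this
  · simp [List.map_pmap]

lemma good_subset (a m : ℕ) :
    Good a m ⊆ {l : List ℕ | (∀ x ∈ l, 0 < x ∧ x < a ^ 6) ∧ continuant l = a ^ m} := by
  rintro l ⟨b, w, c, rfl, hb, hc, hw, h⟩
  refine ⟨?_, h⟩
  intro x hx
  simp at hx
  rcases hx with rfl | hx | rfl
  · omega
  · exact hw x hx
  · omega

lemma good_finite (a m : ℕ) : (Good a m).Finite := (finite_counted _ _).subset (good_subset a m)

lemma good_le_f (a m : ℕ) : (Good a m).ncard ≤ f (a ^ m) (a ^ 6) :=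
  Set.ncard_le_ncard (good_subset a m) (finite_counted _ _)

lemma fold_mem {a : ℕ} (ha : 2 ≤ a) {j k m : ℕ} (hk : k ≤ 6) (hm : 2 * j + k = m) (s : Bool)
    {u : List ℕ} (hu : u ∈ Good a j) : fold a k s u ∈ Good a m := by
  obtain ⟨b, w, c, rfl, hb, hc, hw, h⟩ := hu
  rw [fold_append]
  refine ⟨b, w ++ mid a k s c ++ w.reverse, b, by simp, hb, hb, ?_, ?_⟩
  · have h1 : a ^ k ≤ a ^ 6 := Nat.pow_le_pow_right (by omega) hk
    have h2 : k ≠ 0 → 2 ≤ a ^ k := fun h0 => ha.trans (Nat.le_self_pow h0 a)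
    intro x hx
    simp only [List.mem_append, List.mem_reverse] at hx
    rcases hx with (hx | hx) | hx
    · exact hw x hx
    · unfold mid at hx
      by_cases h0 : k = 0
      · cases s <;> simp [h0] at hx <;> omega
      · have := h2 h0
        cases s <;> simp [h0] at hx <;> omega
    · exact hw x hx
  · rw [continuant_fold (by omega) k s _ (by omega), h, ← hm]
    ring

lemma fold_inj {a : ℕ} (ha : 2 ≤ a) {j j' k k' : ℕ} {s s' : Bool}
    {u u' : List ℕ} (hu : u ∈ Good a j) (hu' : u' ∈ Good a j') (h : fold a k s u = fold a k' s' u') :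
    k = k' ∧ s = s' ∧ u = u' := by
  obtain ⟨b, w, c, rfl, hb, hc, hw, -⟩ := hu
  obtain ⟨b', w', c', rfl, hb', hc', hw', -⟩ := hu'
  rw [fold_append, fold_append] at h
  obtain ⟨h1, h2, h3, h4⟩ := mid_inj ha (by simp) (by simp) (by omega) (by omega) h
  exact ⟨h1, h2, by rw [h3, h4]⟩

/-- The basic recursion: all folds with result `a ^ m` are pairwise distinct. -/
lemma two_mul_sum_le {a : ℕ} (ha : 2 ≤ a) (m : ℕ) (J : Finset ℕ) (j : ℕ → ℕ)
    (hJ : ∀ k ∈ J, k ≤ 6 ∧ 2 * j k + k = m) :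
    2 * ∑ k ∈ J, (Good a (j k)).ncard ≤ (Good a m).ncard := by
  have key : ((J ×ˢ (Finset.univ : Finset Bool)).sigma
      (fun p => (good_finite a (j p.1)).toFinset)).card ≤ (good_finite a m).toFinset.card := by
    apply Finset.card_le_card_of_injOn (fun q => fold a q.1.1 q.1.2 q.2)
    · rintro ⟨⟨k, s⟩, u⟩ hq
      simp at hq ⊢
      exact fold_mem ha (hJ k hq.1).1 (hJ k hq.1).2 s hq.2
    · rintro ⟨⟨k, s⟩, u⟩ hq ⟨⟨k', s'⟩, u'⟩ hq' h
      simp at hq hq' h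
      obtain ⟨rfl, rfl, rfl⟩ := fold_inj ha hq.2 hq'.2 h
      rfl
  rw [Finset.card_sigma, Finset.sum_product] at key
  simp only [← Set.ncard_eq_toFinset_card, Finset.sum_const, Finset.card_univ, Fintype.card_bool,
    smul_eq_mul] at key
  rwa [← Finset.mul_sum] at key

/-- Seeds of continuant `a ^ 3, …, a ^ 8`; for `a = 2` the tail `1, a - 1` of the generic seed
is contracted to `2`. -/
lemma seed {a : ℕ} (ha : 2 ≤ a) {k : ℕ} (hk : 1 ≤ k) (hk6 : k ≤ 6) : (Good a (k + 2)).Nonempty := by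
  have h1 : a ^ k ≤ a ^ 6 := Nat.pow_le_pow_right (by omega) hk6
  have h2 : 2 ≤ a ^ k := ha.trans (Nat.le_self_pow (by omega) a)
  have h3 : a + 2 ≤ a ^ 6 := by
    have : a ^ 2 ≤ a ^ 6 := Nat.pow_le_pow_right (by omega) (by norm_num)
    nlinarith
  obtain ⟨y, hy⟩ : ∃ y, a ^ k = y + 1 := ⟨a ^ k - 1, by omega⟩
  rcases Nat.eq_or_lt_of_le ha with rfl | ha3
  · refine ⟨[2, y, 2], 2, [y], 2, rfl, by omega, by omega, ?_, ?_⟩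
    · intro x hx
      simp at hx
      omega
    · rw [pow_add, hy]
      simp [continuant]
      ring
  · obtain ⟨c, rfl⟩ : ∃ c, a = c + 1 := ⟨a - 1, by omega⟩
    refine ⟨[c + 1, y, 1, c], c + 1, [y, 1], c, rfl, by omega, by omega, ?_, ?_⟩
    · intro x hx
      simp at hx
      omega
    · rw [pow_add, hy]
      simp [continuant]
      ring

lemma good_pos {a : ℕ} (ha : 2 ≤ a) (m : ℕ) (hm : 3 ≤ m) : 1 ≤ (Good a m).ncard := by
  induction m using Nat.strong_induction_on with
  | _ m ih =>
    by_cases h : m ≤ 8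
    · have := seed ha (k := m - 2) (by omega) (by omega)
      rw [show m - 2 + 2 = m by omega] at this
      exact (Set.ncard_pos (good_finite a m)).2 this
    · have h1 := two_mul_sum_le ha m {2 - m % 2} (fun k => (m - k) / 2) (by
        intro k hk
        simp at hk
        omega)
      have h2 := ih ((m - (2 - m % 2)) / 2) (by omega) (by omega)
      simp at h1
      omega

/-! ### Iterating the recursion five times -/

/-- The number of good sequences, with the index shifted by the fixed point `-6` of the map
`m ↦ 2 * m + 6`. -/
noncomputable def shifted (a s : ℕ) : ℝ := ((Good a (s - 6)).ncard : ℝ)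

lemma shifted_even {a : ℕ} (ha : 2 ≤ a) (t : ℕ) (ht : 9 ≤ t) :
    2 * (shifted a t + shifted a (t + 1) + shifted a (t + 2) + shifted a (t + 3))
      ≤ shifted a (2 * t) := by
  have h := two_mul_sum_le ha (2 * t - 6) {6, 4, 2, 0} (fun k => t - 6 + (6 - k) / 2) (by
    intro k hk
    simp at hk
    rcases hk with rfl | rfl | rfl | rfl <;> omega)
  simp [Finset.sum_insert] at h
  unfold shifted
  rw [show t + 1 - 6 = t - 6 + 1 by omega, show t + 2 - 6 = t - 6 + 2 by omega,
    show t + 3 - 6 = t - 6 + 3 by omega]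
  have h' := (Nat.cast_le (α := ℝ)).2 h
  push_cast at h'
  linarith

lemma shifted_odd {a : ℕ} (ha : 2 ≤ a) (t : ℕ) (ht : 9 ≤ t) :
    2 * (shifted a (t + 1) + shifted a (t + 2) + shifted a (t + 3))
      ≤ shifted a (2 * t + 1) := by
  have h := two_mul_sum_le ha (2 * t + 1 - 6) {5, 3, 1} (fun k => t - 6 + (7 - k) / 2) (by
    intro k hk
    simp at hk
    rcases hk with rfl | rfl | rfl <;> omega)
  simp [Finset.sum_insert] at h
  unfold shifted
  rw [show t + 1 - 6 = t - 6 + 1 by omega, show t + 2 - 6 = t - 6 + 2 by omega,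
    show t + 3 - 6 = t - 6 + 3 by omega, show 2 * t + 1 - 6 = 2 * t - 5 by omega]
  have h' := (Nat.cast_le (α := ℝ)).2 h
  push_cast at h'
  linarith

/-- The class of a shifted index `s = m + 6`: `0` for `m` even, `1` for `m ≡ 1` and `2` for
`m ≡ 3` modulo `4`. -/
def cls (s : ℕ) : ℕ := if s % 2 = 0 then 0 else if s % 4 = 3 then 1 else 2

/-- `cnt i n s` is the number of leaves of class `i` after unfolding the recursion `n` times
from `s`. -/
def cnt (i : ℕ) : ℕ → ℕ → ℕ
  | 0, s => if cls s = i then 1 else 0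
  | n + 1, s =>
    if s % 2 = 0 then cnt i n (s / 2) + cnt i n (s / 2 + 1) + cnt i n (s / 2 + 2) + cnt i n (s / 2 + 3)
    else cnt i n (s / 2 + 1) + cnt i n (s / 2 + 2) + cnt i n (s / 2 + 3)

lemma cnt_add (i n s q : ℕ) : cnt i n (s + 4 * 2 ^ n * q) = cnt i n s := by
  induction n generalizing s with
  | zero =>
    have : cls (s + 4 * 2 ^ 0 * q) = cls s := by
      unfold cls
      rw [show (s + 4 * 2 ^ 0 * q) % 2 = s % 2 by omega,
        show (s + 4 * 2 ^ 0 * q) % 4 = s % 4 by omega]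
    simp only [cnt, this]
  | succ n ih =>
    have h : s + 4 * 2 ^ (n + 1) * q = s + 2 * (4 * 2 ^ n * q) := by ring
    have h1 : (s + 2 * (4 * 2 ^ n * q)) % 2 = s % 2 := by omega
    have h2 : ∀ r, (s + 2 * (4 * 2 ^ n * q)) / 2 + r = s / 2 + r + 4 * 2 ^ n * q := by omega
    have h3 := h2 0
    rw [Nat.add_zero, Nat.add_zero] at h3
    rw [h]
    simp only [cnt, h1, h2, ih]
    rw [h3, ih]

/-- The row of the matrix `B` belonging to the class of `s`. -/
def rowB (s : ℕ) : ℕ × ℕ × ℕ :=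
  if cls s = 0 then (293, 134, 170) else if cls s = 1 then (228, 104, 132) else (209, 96, 121)

/-- The leaf counts at depth five, compared with the rows of `B` in the dual of the cone
`4 e ≥ 5 x`, `x ≥ y ≥ 0`. -/
lemma cnt_bound (s : ℕ) : (rowB s).1 ≤ cnt 0 5 s ∧
    5 * (rowB s).1 + 4 * (rowB s).2.1 ≤ 5 * cnt 0 5 s + 4 * cnt 1 5 s ∧
    5 * (rowB s).1 + 4 * (rowB s).2.1 + 4 * (rowB s).2.2 ≤
      5 * cnt 0 5 s + 4 * cnt 1 5 s + 4 * cnt 2 5 s := by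
  have key : ∀ s < 128, (rowB s).1 ≤ cnt 0 5 s ∧
    5 * (rowB s).1 + 4 * (rowB s).2.1 ≤ 5 * cnt 0 5 s + 4 * cnt 1 5 s ∧
    5 * (rowB s).1 + 4 * (rowB s).2.1 + 4 * (rowB s).2.2 ≤
      5 * cnt 0 5 s + 4 * cnt 1 5 s + 4 * cnt 2 5 s := by decide +kernel
  have hs : s = s % 128 + 4 * 2 ^ 5 * (s / 128) := by omega
  have hc : rowB s = rowB (s % 128) := by
    unfold rowB cls
    rw [show s % 128 % 2 = s % 2 by omega, show s % 128 % 4 = s % 4 by omega]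
  have h : ∀ i, cnt i 5 s = cnt i 5 (s % 128) := fun i => by
    conv_lhs => rw [hs]
    exact cnt_add i 5 _ _
  rw [hc, h, h, h]
  exact key _ (Nat.mod_lt _ (by norm_num))

/-- The coordinate of `(e, x, y)` belonging to the class of `s`. -/
def weight (e x y : ℝ) (s : ℕ) : ℝ := if cls s = 0 then e else if cls s = 1 then x else y

lemma iterate {a : ℕ} (ha : 2 ≤ a) {L : ℕ} (hL : 9 ≤ L) (e x y : ℝ)
    (h : ∀ s, L ≤ s → weight e x y s ≤ shifted a s) (n : ℕ) :
    ∀ s, L * 2 ^ n ≤ s →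
      2 ^ n * (cnt 0 n s * e + cnt 1 n s * x + cnt 2 n s * y) ≤ shifted a s := by
  induction n with
  | zero =>
    intro s hs
    have := h s (by simpa using hs)
    have hc : cls s = 0 ∨ cls s = 1 ∨ cls s = 2 := by unfold cls; split_ifs <;> simp
    rcases hc with hc | hc | hc <;> simpa [cnt, hc, weight] using this
  | succ n ih =>
    intro s hs
    have hs' : L * 2 ^ n ≤ s / 2 := by
      rw [pow_succ] at hs
      have : L * (2 ^ n * 2) = 2 * (L * 2 ^ n) := by ring
      omega
    have h9 : 9 ≤ s / 2 := by
      have : L * 1 ≤ L * 2 ^ n := Nat.mul_le_mul_left _ Nat.one_le_two_pow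
      omega
    have h0 := ih (s / 2) hs'
    have h1 := ih (s / 2 + 1) (by omega)
    have h2 := ih (s / 2 + 2) (by omega)
    have h3 := ih (s / 2 + 3) (by omega)
    by_cases hp : s % 2 = 0
    · have hr := shifted_even ha (s / 2) h9
      rw [show 2 * (s / 2) = s by omega] at hr
      simp only [cnt, hp, if_true, pow_succ]
      push_cast
      linarith
    · have hr := shifted_odd ha (s / 2) h9
      rw [show 2 * (s / 2) + 1 = s by omega] at hr
      simp only [cnt, hp, if_false, pow_succ]
      push_cast
      linarith

lemma weight_mul (g e x y : ℝ) (s : ℕ) : weight (g * e) (g * x) (g * y) s = g * weight e x y s := by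
  unfold weight
  split_ifs <;> rfl

/-- If `(e, x, y)` is an eigenvector of `B` in the relevant cone, then the class-wise lower bound
gains the factor `32 * μ` when the index is multiplied by `32`. -/
lemma growth {a : ℕ} (ha : 2 ≤ a) {μ e x y : ℝ} (hμ : 0 < μ) (hex : 5 * x ≤ 4 * e) (hxy : y ≤ x)
    (hy : 0 ≤ y)
    (h0 : 293 * e + 134 * x + 170 * y = μ * e) (h1 : 228 * e + 104 * x + 132 * y = μ * x)
    (h2 : 209 * e + 96 * x + 121 * y = μ * y) {c : ℝ} (hc : 0 < c)
    (hbase : ∀ s, 9 ≤ s → c * weight e x y s ≤ shifted a s) (n : ℕ) :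
    ∀ s, 9 * 32 ^ n ≤ s → c * (32 * μ) ^ n * weight e x y s ≤ shifted a s := by
  induction n with
  | zero => simpa using hbase
  | succ n ih =>
    intro s hs
    set g := c * (32 * μ) ^ n with hg
    have hgp : 0 < g := by positivity
    have hi := iterate ha (L := 9 * 32 ^ n) (by have := Nat.one_le_pow n 32 (by norm_num); omega)
      (g * e) (g * x) (g * y) (fun s hs => by rw [weight_mul]; exact ih s hs) 5 s
      (by rw [pow_succ] at hs; norm_num; linarith)
    obtain ⟨b0, b1, b2⟩ := cnt_bound s
    have b0' := (Nat.cast_le (α := ℝ)).2 b0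
    have b1' := (Nat.cast_le (α := ℝ)).2 b1
    have b2' := (Nat.cast_le (α := ℝ)).2 b2
    push_cast at b0' b1' b2'
    have hrow : ((rowB s).1 : ℝ) * e + (rowB s).2.1 * x + (rowB s).2.2 * y
        = μ * weight e x y s := by
      unfold rowB weight
      split_ifs <;> simp <;> linarith
    -- Abel summation along the cone inequalities
    have hcone : ((rowB s).1 : ℝ) * e + (rowB s).2.1 * x + (rowB s).2.2 * y
        ≤ cnt 0 5 s * e + cnt 1 5 s * x + cnt 2 5 s * y := by
      have p0 := mul_nonneg (sub_nonneg.2 b0') (sub_nonneg.2 hex)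
      have p1 := mul_nonneg (sub_nonneg.2 b1') (sub_nonneg.2 hxy)
      have p2 := mul_nonneg (sub_nonneg.2 b2') hy
      linarith
    rw [hrow] at hcone
    have := mul_le_mul_of_nonneg_left hcone hgp.le
    calc c * (32 * μ) ^ (n + 1) * weight e x y s
        = 32 * (g * (μ * weight e x y s)) := by rw [hg]; ring
      _ ≤ 2 ^ 5 * (cnt 0 5 s * (g * e) + cnt 1 5 s * (g * x) + cnt 2 5 s * (g * y)) := by linarith
      _ ≤ shifted a s := hi

/-! ### The eigenvalue and the conclusion -/

lemma charpoly_root_iff (B : Matrix (Fin 3) (Fin 3) ℝ)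
    (hB : B = (!![2, 1, 1; 2, 0, 1; 1, 1, 1] : Matrix (Fin 3) (Fin 3) ℝ) ^ 5 +
      !![0, 1, -1; 0, 1, -1; 0, 1, -1]) (x : ℝ) :
    B.charpoly.IsRoot x ↔ x ^ 3 - 518 * x ^ 2 - 245 * x - 56 = 0 := by
  have hB' : B = !![293, 134, 170; 228, 104, 132; 209, 96, 121] := by
    rw [hB]
    ext i j
    fin_cases i <;> fin_cases j <;>
      simp [pow_succ] <;> norm_num
  rw [Polynomial.IsRoot, Matrix.eval_charpoly, hB', Matrix.det_fin_three]
  simp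
  ring_nf

theorem theorem3 (B : Matrix (Fin 3) (Fin 3) ℝ)
    (hB : B = (!![2, 1, 1; 2, 0, 1; 1, 1, 1] : Matrix (Fin 3) (Fin 3) ℝ) ^ 5 +
      !![0, 1, -1; 0, 1, -1; 0, 1, -1])
    (μ : ℝ) (hμroot : B.charpoly.IsRoot μ)
    (hμmax : ∀ x : ℝ, B.charpoly.IsRoot x → x ≤ μ) :
    ∀ a : ℕ, 2 ≤ a →
      ∃ C : ℝ, 0 < C ∧ ∃ M : ℕ, ∀ m : ℕ, M ≤ m →
        C * (m : ℝ) ^ (1 + (1 / 5 : ℝ) * Real.logb 2 μ) ≤ (f (a ^ m) (a ^ 6) : ℝ) := by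
  have hp := (charpoly_root_iff B hB μ).1 hμroot
  have hμ : 518 ≤ μ := by
    have hcont : ContinuousOn (fun x : ℝ => x ^ 3 - 518 * x ^ 2 - 245 * x - 56)
        (Set.Icc 518 519) := by fun_prop
    obtain ⟨x, hx, hx0⟩ := intermediate_value_Icc (by norm_num) hcont
      (show (0 : ℝ) ∈ _ by constructor <;> norm_num)
    exact hx.1.trans (hμmax x ((charpoly_root_iff B hB x).2 hx0))
  intro a ha
  -- the first column of the adjugate of `μ - B`
  set e := μ ^ 2 - 225 * μ - 88 with he
  set x := 228 * μ with hx
  set y := 209 * μ + 152 with hy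
  have hypos : 0 < y := by rw [hy]; linarith
  have hyx : y ≤ x := by rw [hy, hx]; linarith
  have hxe : 5 * x ≤ 4 * e := by rw [hx, he]; nlinarith
  have hepos : 0 < e := by linarith
  have hw : ∀ s, y ≤ weight e x y s ∧ weight e x y s ≤ e := by
    intro s
    unfold weight
    split_ifs <;> constructor <;> linarith
  have hgrow := growth ha (μ := μ) (by linarith) hxe hyx hypos.le
    (by rw [he, hx, hy]; linear_combination (-1) * hp) (by rw [he, hx, hy]; ring)
    (by rw [he, hx, hy]; ring) (inv_pos.2 hepos) (by
      intro s hs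
      have h1 : (1 : ℝ) ≤ shifted a s := by
        unfold shifted
        exact_mod_cast good_pos ha (s - 6) (by omega)
      refine le_trans ?_ h1
      rw [inv_mul_le_iff₀ hepos, mul_one]
      exact (hw s).2)
  set E := 1 + (1 / 5 : ℝ) * Real.logb 2 μ with hE
  have hE0 : 0 ≤ E := by
    have : 0 ≤ Real.logb 2 μ := Real.logb_nonneg (by norm_num) (by linarith)
    positivity
  have h32 : (32 : ℝ) ^ E = 32 * μ := by
    rw [hE, Real.rpow_add (by norm_num), Real.rpow_one, Real.rpow_mul (by norm_num)]
    have : (32 : ℝ) ^ (1 / 5 : ℝ) = 2 := by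
      rw [show (32 : ℝ) = 2 ^ (5 : ℝ) by norm_num, ← Real.rpow_mul (by norm_num)]
      norm_num
    rw [this, Real.rpow_logb (by norm_num) (by norm_num) (by linarith)]
  refine ⟨e⁻¹ * y / 288 ^ E, by positivity, 3, ?_⟩
  intro m hm
  -- `n` is maximal with `9 * 32 ^ n ≤ m + 6`
  set n := Nat.log 32 ((m + 6) / 9) with hn
  have hn1 : 9 * 32 ^ n ≤ m + 6 := by
    have := Nat.pow_log_le_self 32 (x := (m + 6) / 9) (by omega)
    rw [← hn] at this
    omega
  have hn2 : m ≤ 288 * 32 ^ n := by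
    have := Nat.lt_pow_succ_log_self (b := 32) (by norm_num) ((m + 6) / 9)
    rw [← hn, Nat.succ_eq_add_one, pow_succ] at this
    omega
  have hf := hgrow n (m + 6) hn1
  have hle : ((Good a m).ncard : ℝ) ≤ f (a ^ m) (a ^ 6) := by exact_mod_cast good_le_f a m
  have hsh : shifted a (m + 6) = (Good a m).ncard := by simp [shifted]
  have hmE : (m : ℝ) ^ E ≤ 288 ^ E * (32 * μ) ^ n := by
    have h1 : (m : ℝ) ≤ 288 * 32 ^ n := by exact_mod_cast hn2
    calc (m : ℝ) ^ E ≤ (288 * 32 ^ n) ^ E := Real.rpow_le_rpow (by positivity) h1 hE0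
      _ = 288 ^ E * (32 * μ) ^ n := by
        rw [Real.mul_rpow (by norm_num) (by positivity), ← h32, ← Real.rpow_natCast,
          ← Real.rpow_natCast, ← Real.rpow_mul (by norm_num), ← Real.rpow_mul (by norm_num),
          mul_comm (n : ℝ) E]
  have hpos : (0 : ℝ) < 288 ^ E := by positivity
  have hμn : 0 ≤ (32 * μ) ^ n := pow_nonneg (by linarith) n
  calc e⁻¹ * y / 288 ^ E * (m : ℝ) ^ E
      ≤ e⁻¹ * y / 288 ^ E * (288 ^ E * (32 * μ) ^ n) :=
        mul_le_mul_of_nonneg_left hmE (by positivity)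
    _ = e⁻¹ * (32 * μ) ^ n * y := by field_simp
    _ ≤ e⁻¹ * (32 * μ) ^ n * weight e x y (m + 6) :=
        mul_le_mul_of_nonneg_left (hw _).1 (mul_nonneg (inv_nonneg.2 hepos.le) hμn)
    _ ≤ shifted a (m + 6) := hf
    _ ≤ f (a ^ m) (a ^ 6) := by rw [hsh]; exact hle
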